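/- Let d ≥ 1 and n ≥ 1 be integers, σ > 0, L > 0, let Σ₀ be a symmetric positive definite real d×d matrix, and let A₁, …, A_n ∈ ℝ^d satisfy ‖A_t‖₂ ≤ L for all t. For each t define G_t = σ^{−2} ∑_{ℓ=1}^{t−1} A_ℓ A_ℓᵀ and Σ̂_t = (Σ₀^{−1} + G_t)^{−1}, and let σ_{0,max}² = λ_max(Σ₀)·L², where λ_max(Σ₀) is the largest eigenvalue of Σ₀. Then ∑_{t=1}^{n} log(1 + σ^{−2} A_tᵀ Σ̂_t A_t) ≤ d · log(1 + σ_{0,max}² n / (σ² d)). -/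

import Mathlib

/-!
The matrix determinant lemma turns each summand into a difference of consecutive values of
`log det (S₀⁻¹ + G)` (`log_det_add_smul_vecMulVec`), so the sum telescopes to
`log det (S₀⁻¹ + G_{n+1}) + log det S₀`. Writing `S₀ = Bᵀ B`, this is the log-determinant of the
positive definite matrix `B (S₀⁻¹ + G_{n+1}) Bᵀ`. The arithmetic-geometric mean inequality for the
eigenvalues (`log_det_le_trace`) bounds it by `d log (trace / d)`, and by cyclicity the trace is
`d + σ⁻² ∑ A_tᵀ S₀ A_t`, which the Rayleigh bound `xᵀ S₀ x ≤ λ_max ‖x‖²` controls.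
-/

open Matrix Finset

/-- The arithmetic-geometric mean inequality `det M ≤ (tr M / d) ^ d` in logarithmic form. -/
lemma log_det_le_trace {d : ℕ} (hd : 1 ≤ d) {M : Matrix (Fin d) (Fin d) ℝ} (hM : M.PosDef) :
    Real.log M.det ≤ d * Real.log (M.trace / d) := by
  have : Nonempty (Fin d) := ⟨⟨0, hd⟩⟩
  have hd' : (0 : ℝ) < d := by exact_mod_cast hd
  have hpos := hM.eigenvalues_pos
  have htr : M.trace = ∑ i, hM.1.eigenvalues i := by
    simpa using hM.1.trace_eq_sum_eigenvalues
  have hdet : M.det = ∏ i, hM.1.eigenvalues i := by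
    simpa using hM.1.det_eq_prod_eigenvalues
  have hm : 0 < M.trace / d := div_pos hM.trace_pos hd'
  rw [hdet, Real.log_prod (fun i _ => (hpos i).ne')]
  set m := M.trace / d with hmdef
  -- The tangent line of `log` at the mean `m` lies above the graph; its linear part sums to zero.
  have key : ∀ i, Real.log (hM.1.eigenvalues i) ≤ Real.log m + (hM.1.eigenvalues i / m - 1) := by
    intro i
    have := Real.log_le_sub_one_of_pos (div_pos (hpos i) hm)
    rw [Real.log_div (hpos i).ne' hm.ne'] at this
    linarith
  refine (Finset.sum_le_sum fun i _ => key i).trans (le_of_eq ?_)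
  have hmean : M.trace / m = d := by
    rw [hmdef, div_div_cancel₀ hM.trace_pos.ne']
  rw [Finset.sum_add_distrib, Finset.sum_sub_distrib, ← Finset.sum_div, ← htr, hmean]
  simp

/-- The Rayleigh quotient bound. -/
lemma dotProduct_mulVec_le_iSup_eigenvalues {d : ℕ} {S : Matrix (Fin d) (Fin d) ℝ}
    (hS : S.IsHermitian) (x : Fin d → ℝ) :
    x ⬝ᵥ S *ᵥ x ≤ (⨆ i, hS.eigenvalues i) * (x ⬝ᵥ x) := by
  open scoped MatrixOrder in
  have h : S ≤ algebraMap ℝ _ (⨆ i, hS.eigenvalues i) := by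
    refine le_algebraMap_of_spectrum_le (fun r hr => ?_) hS.isSelfAdjoint
    rw [hS.spectrum_real_eq_range_eigenvalues] at hr
    obtain ⟨i, rfl⟩ := hr
    exact le_ciSup (Set.finite_range _).bddAbove i
  have h2 := (Matrix.le_iff.1 h).dotProduct_mulVec_nonneg x
  simp only [star_trivial, Matrix.sub_mulVec, dotProduct_sub, Algebra.algebraMap_eq_smul_one,
    Matrix.smul_mulVec, Matrix.one_mulVec, dotProduct_smul, smul_eq_mul] at h2
  linarith

/-- The matrix determinant lemma for a rank-one update, in logarithmic form. -/
lemma log_det_add_smul_vecMulVec {d : ℕ} {P : Matrix (Fin d) (Fin d) ℝ} (hP : P.PosDef)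
    {c : ℝ} (hc : 0 < c) (a : Fin d → ℝ) :
    Real.log (1 + c * (a ⬝ᵥ P⁻¹ *ᵥ a)) =
      Real.log (P + c • vecMulVec a a).det - Real.log P.det := by
  have hnn : 0 ≤ a ⬝ᵥ P⁻¹ *ᵥ a := by
    simpa using hP.inv.posSemidef.dotProduct_mulVec_nonneg a
  have hdet : (P + c • vecMulVec a a).det = P.det * (1 + c * (a ⬝ᵥ P⁻¹ *ᵥ a)) := by
    rw [← smul_vecMulVec, vecMulVec_eq Unit,
      det_add_replicateCol_mul_replicateRow hP.det_pos.ne'.isUnit]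
    congr 1
    rw [det_unique, Matrix.mul_assoc, ← replicateCol_mulVec, Matrix.add_apply,
      Matrix.replicateRow_mul_replicateCol_apply, mulVec_smul, dotProduct_smul]
    simp
  rw [hdet, Real.log_mul hP.det_pos.ne' (by positivity)]
  ring

/-- The telescoping log-determinant step in the proof of Lemma 10: the sum of the logarithmic
posterior-variance terms is at most `d · log(1 + σ_{0,max}² n / (σ² d))`. -/
theorem sum_log_posterior_variances_le (d n : ℕ) (hd : 1 ≤ d) (hn : 1 ≤ n)
    (σ L : ℝ) (hσ : 0 < σ) (hL : 0 < L)
    (S₀ : Matrix (Fin d) (Fin d) ℝ) (hS₀ : S₀.PosDef)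
    (A : Fin n → Fin d → ℝ) (hA : ∀ t, Real.sqrt (A t ⬝ᵥ A t) ≤ L)
    (G : Fin n → Matrix (Fin d) (Fin d) ℝ)
    (hG : ∀ t, G t = (σ ^ 2)⁻¹ •
      ∑ ℓ ∈ Finset.univ.filter (fun ℓ => ℓ < t), vecMulVec (A ℓ) (A ℓ))
    (Shat : Fin n → Matrix (Fin d) (Fin d) ℝ)
    (hShat : ∀ t, Shat t = (S₀⁻¹ + G t)⁻¹)
    (lmax : ℝ) (hlmax : lmax = ⨆ i, hS₀.isHermitian.eigenvalues i)
    (σ0max2 : ℝ) (hσ0max2 : σ0max2 = lmax * L ^ 2) :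
    ∑ t : Fin n, Real.log (1 + (σ ^ 2)⁻¹ * (A t ⬝ᵥ (Shat t) *ᵥ A t))
      ≤ d * Real.log (1 + σ0max2 * n / (σ ^ 2 * d)) := by
  have hd' : (0 : ℝ) < d := by exact_mod_cast hd
  have : Nonempty (Fin d) := ⟨⟨0, hd⟩⟩
  set c : ℝ := (σ ^ 2)⁻¹ with hc
  have hcpos : 0 < c := by positivity
  -- Indexing the precision matrices by `ℕ` makes the one after the last round available.
  let P : ℕ → Matrix (Fin d) (Fin d) ℝ := fun k =>
    S₀⁻¹ + c • ∑ ℓ ∈ Finset.univ.filter (fun ℓ : Fin n => (ℓ : ℕ) < k), vecMulVec (A ℓ) (A ℓ)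
  have hP : ∀ k, (P k).PosDef := fun k =>
    hS₀.inv.add_posSemidef ((posSemidef_sum _ fun ℓ _ => by
      simpa using posSemidef_vecMulVec_self_star (A ℓ)).smul hcpos.le)
  have hPsucc : ∀ t : Fin n, P (t + 1) = P t + c • vecMulVec (A t) (A t) := by
    intro t
    have hfilter : Finset.univ.filter (fun ℓ : Fin n => (ℓ : ℕ) < t + 1) =
        insert t (Finset.univ.filter (fun ℓ : Fin n => (ℓ : ℕ) < t)) := by
      ext ℓ
      simp only [Finset.mem_filter, Finset.mem_univ, true_and, Finset.mem_insert, Fin.ext_iff]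
      omega
    simp only [P, hfilter]
    rw [Finset.sum_insert (by simp), smul_add]
    abel
  have hterm : ∀ t : Fin n, Real.log (1 + c * (A t ⬝ᵥ (Shat t) *ᵥ A t)) =
      Real.log (P (t + 1)).det - Real.log (P t).det := by
    intro t
    have hS : Shat t = (P t)⁻¹ := by rw [hShat, hG]; rfl
    rw [hS, log_det_add_smul_vecMulVec (hP t) hcpos, hPsucc]
  have hP0 : P 0 = S₀⁻¹ := by simp [P]
  have hPn : P n = S₀⁻¹ + c • ∑ ℓ, vecMulVec (A ℓ) (A ℓ) := by simp [P]
  rw [Finset.sum_congr rfl fun t _ => hterm t,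
    Fin.sum_univ_eq_sum_range (fun k => Real.log (P (k + 1)).det - Real.log (P k).det) n,
    Finset.sum_range_sub (fun k => Real.log (P k).det), hP0]
  obtain ⟨B, hB⟩ : ∃ B : Matrix (Fin d) (Fin d) ℝ, S₀ = Bᴴ * B := by
    open scoped MatrixOrder in
    exact CStarAlgebra.nonneg_iff_eq_star_mul_self.mp hS₀.posSemidef.nonneg
  have hBu : IsUnit B := by
    rw [Matrix.isUnit_iff_isUnit_det, isUnit_iff_ne_zero]
    intro h0
    have := hS₀.det_pos
    rw [hB, det_mul, h0, mul_zero] at this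
    exact this.false
  have hM : (B * P n * Bᴴ).PosDef :=
    (hP n).mul_mul_conjTranspose_same (Matrix.vecMul_injective_of_isUnit hBu)
  have hdetM : (B * P n * Bᴴ).det = (P n).det * S₀.det := by
    rw [hB]; simp only [det_mul]; ring
  have htrM : (B * P n * Bᴴ).trace = d + c * ∑ ℓ, A ℓ ⬝ᵥ S₀ *ᵥ A ℓ := by
    rw [Matrix.mul_assoc, Matrix.trace_mul_comm, Matrix.mul_assoc, ← hB, hPn, Matrix.add_mul,
      Matrix.nonsing_inv_mul _ hS₀.det_pos.ne'.isUnit, trace_add, trace_one, Matrix.smul_mul,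
      Matrix.sum_mul, trace_smul, trace_sum, Fintype.card_fin, smul_eq_mul]
    congr 2
    refine Finset.sum_congr rfl fun ℓ _ => ?_
    rw [vecMulVec_mul, trace_vecMulVec, dotProduct_comm, dotProduct_mulVec]
  have hlpos : 0 ≤ lmax := by
    rw [hlmax]; exact Real.iSup_nonneg fun i => (hS₀.eigenvalues_pos i).le
  have hquad : ∀ ℓ, A ℓ ⬝ᵥ S₀ *ᵥ A ℓ ≤ σ0max2 := by
    intro ℓ
    have h1 := dotProduct_mulVec_le_iSup_eigenvalues hS₀.isHermitian (A ℓ)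
    rw [← hlmax] at h1
    have h2 : A ℓ ⬝ᵥ A ℓ ≤ L ^ 2 := (Real.sqrt_le_left hL.le).1 (hA ℓ)
    rw [hσ0max2]
    exact h1.trans (mul_le_mul_of_nonneg_left h2 hlpos)
  have hsum : ∑ ℓ, A ℓ ⬝ᵥ S₀ *ᵥ A ℓ ≤ n * σ0max2 := by
    simpa using Finset.sum_le_sum fun ℓ (_ : ℓ ∈ Finset.univ) => hquad ℓ
  have hlog : Real.log (P n).det - Real.log (S₀⁻¹).det = Real.log (B * P n * Bᴴ).det := by
    rw [hdetM, Real.log_mul (hP n).det_pos.ne' hS₀.det_pos.ne', det_nonsing_inv,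
      Ring.inverse_eq_inv', Real.log_inv]
    ring
  rw [hlog]
  refine (log_det_le_trace hd hM).trans (mul_le_mul_of_nonneg_left ?_ hd'.le)
  refine Real.log_le_log (div_pos hM.trace_pos hd') ?_
  rw [htrM, div_le_iff₀ hd']
  have heq : (1 + σ0max2 * n / (σ ^ 2 * d)) * d = d + c * (n * σ0max2) := by
    rw [hc]; field_simp
  rw [heq]
  gcongr
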